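/- arXiv:2404.05358 — 5 statements merged into one kernel-verified Lean document; each statement's English description precedes it below -/
import Mathlib

section
/- Assume the triples φ = (φ₁,φ₂,φ₃) and ψ = (ψ₁,ψ₂,ψ₃) are C¹ on [0,L] and vanish at both endpoints 0 and L (so that all boundary terms vanish). Then the operator J(z) is skew-adjoint in the L² inner product: (φ, J(z)ψ) = −(J(z)φ, ψ). -/
open MeasureTheory intervalIntegral

/-- The interconnection operator `J(z)` of the port-Hamiltonian formulation of the
compressible non-isothermal Euler equations, acting componentwise on a C¹ triple
`ψ = (ψ₁, ψ₂, ψ₃)` of functions on `[0,L]`. -/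
noncomputable def Jop (lam d : ℝ) (ρ e p v : ℝ → ℝ) (ψ₁ ψ₂ ψ₃ : ℝ → ℝ) :
    (ℝ → ℝ) × (ℝ → ℝ) × (ℝ → ℝ) :=
  (fun x => -(deriv ψ₂ x),
   fun x => -(deriv ψ₁ x) - lam / (2 * d) * v x * |v x| * ψ₃ x
      - e x / ρ x * deriv ψ₃ x - 1 / ρ x * deriv (fun y => p y * ψ₃ y) x,
   fun x => lam / (2 * d) * v x * |v x| * ψ₂ x
      - deriv (fun y => e y / ρ y * ψ₂ y) x - p x * deriv (fun y => 1 / ρ y * ψ₂ y) x)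

/-- The L² pairing `(φ,ψ) = ∫₀ᴸ (φ₁ψ₁ + φ₂ψ₂ + φ₃ψ₃) dx` of two triples of functions. -/
noncomputable def L2pairing (L : ℝ) (φ ψ : (ℝ → ℝ) × (ℝ → ℝ) × (ℝ → ℝ)) : ℝ :=
  ∫ x in (0:ℝ)..L, (φ.1 x * ψ.1 x + φ.2.1 x * ψ.2.1 x + φ.2.2 x * ψ.2.2 x)

/-!
Writing `∂` for differentiation, `J(z)` is the block operator
`[[0, -∂, 0], [-∂, 0, -A], [0, A†, 0]]`, where `A f = κ f + a f' + b (p f)'` couples energy to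
momentum, with `κ = (λ / 2d) v|v|`, `a = e / ρ`, `b = 1 / ρ`, and `A† g = κ g - (a g)' - p (b g)'`.
Integration by parts makes `∂` skew-adjoint and `A†` the adjoint of `A`, hence `J(z)` skew-adjoint.
Every boundary term that arises carries the middle component of one of the two triples as a factor.
-/

/-- `f` is C¹ on a neighbourhood of each point of `K`. On a closed interval this is what makes the
two-sided `deriv` meaningful and continuous up to the endpoints. -/
def ContDiffNear (K : Set ℝ) (f : ℝ → ℝ) : Prop :=
  ∀ x ∈ K, ContDiffAt ℝ 1 f x

namespace ContDiffNear

variable {K : Set ℝ} {f g : ℝ → ℝ}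

theorem of_contDiff (hf : ContDiff ℝ 1 f) : ContDiffNear K f :=
  fun _ _ => hf.contDiffAt

theorem mul (hf : ContDiffNear K f) (hg : ContDiffNear K g) :
    ContDiffNear K fun x => f x * g x :=
  fun x hx => (hf x hx).mul (hg x hx)

theorem div (hf : ContDiffNear K f) (hg : ContDiffNear K g) (hg0 : ∀ x ∈ K, g x ≠ 0) :
    ContDiffNear K fun x => f x / g x :=
  fun x hx => (hf x hx).div (hg x hx) (hg0 x hx)

theorem continuousOn (hf : ContDiffNear K f) : ContinuousOn f K :=
  fun x hx => (hf x hx).continuousAt.continuousWithinAt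

theorem hasDerivAt (hf : ContDiffNear K f) {x : ℝ} (hx : x ∈ K) : HasDerivAt f (deriv f x) x :=
  ((hf x hx).differentiableAt one_ne_zero).hasDerivAt

theorem continuousOn_deriv (hf : ContDiffNear K f) : ContinuousOn (deriv f) K := fun x hx =>
  (((hf x hx).continuousAt_fderiv one_ne_zero).clm_apply
    (continuousAt_const (y := (1 : ℝ)))).continuousWithinAt

end ContDiffNear

section Coupling

variable {s t : ℝ} {κ a b p f g : ℝ → ℝ}

theorem integral_mul_deriv_eq_neg_of_eq_zero
    (hf : ContDiffNear (Set.uIcc s t) f) (hg : ContDiffNear (Set.uIcc s t) g)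
    (hgs : g s = 0) (hgt : g t = 0) :
    ∫ x in s..t, g x * deriv f x = -∫ x in s..t, f x * deriv g x := by
  rw [integral_mul_deriv_eq_deriv_mul (fun _ hx => hg.hasDerivAt hx)
    (fun _ hx => hf.hasDerivAt hx) hg.continuousOn_deriv.intervalIntegrable
    hf.continuousOn_deriv.intervalIntegrable]
  simp only [hgs, hgt, zero_mul, sub_zero, zero_sub, mul_comm (deriv g _)]

/-- The first-order operator `f ↦ κ f + a f' + b (p f)'` through which the third component of a
triple enters the second component of its image under `J(z)`. -/
noncomputable def couplingOp (κ a b p f : ℝ → ℝ) : ℝ → ℝ :=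
  fun x => κ x * f x + a x * deriv f x + b x * deriv (fun y => p y * f y) x

/-- The formal adjoint `g ↦ κ g - (a g)' - p (b g)'` of `couplingOp`, through which the second
component of a triple enters the third component of its image under `J(z)`. -/
noncomputable def couplingOpAdjoint (κ a b p g : ℝ → ℝ) : ℝ → ℝ :=
  fun x => κ x * g x - deriv (fun y => a y * g y) x - p x * deriv (fun y => b y * g y) x

theorem intervalIntegrable_couplingOp (hκ : IntervalIntegrable κ volume s t)
    (ha : ContinuousOn a (Set.uIcc s t)) (hb : ContinuousOn b (Set.uIcc s t))
    (hp : ContDiffNear (Set.uIcc s t) p) (hf : ContDiffNear (Set.uIcc s t) f) :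
    IntervalIntegrable (couplingOp κ a b p f) volume s t :=
  ((hκ.mul_continuousOn hf.continuousOn).add
    (ha.mul hf.continuousOn_deriv).intervalIntegrable).add
    (hb.mul (hp.mul hf).continuousOn_deriv).intervalIntegrable

theorem intervalIntegrable_couplingOpAdjoint (hκ : IntervalIntegrable κ volume s t)
    (ha : ContDiffNear (Set.uIcc s t) a) (hb : ContDiffNear (Set.uIcc s t) b)
    (hp : ContinuousOn p (Set.uIcc s t)) (hg : ContDiffNear (Set.uIcc s t) g) :
    IntervalIntegrable (couplingOpAdjoint κ a b p g) volume s t :=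
  ((hκ.mul_continuousOn hg.continuousOn).sub
    (ha.mul hg).continuousOn_deriv.intervalIntegrable).sub
    (hp.mul (hb.mul hg).continuousOn_deriv).intervalIntegrable

theorem integral_mul_couplingOp (hκ : IntervalIntegrable κ volume s t)
    (ha : ContinuousOn a (Set.uIcc s t)) (hb : ContinuousOn b (Set.uIcc s t))
    (hp : ContDiffNear (Set.uIcc s t) p) (hf : ContDiffNear (Set.uIcc s t) f)
    (hg : ContinuousOn g (Set.uIcc s t)) :
    ∫ x in s..t, g x * couplingOp κ a b p f x =
      (∫ x in s..t, κ x * (f x * g x)) + (∫ x in s..t, a x * g x * deriv f x) +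
        ∫ x in s..t, b x * g x * deriv (fun y => p y * f y) x := by
  have hκfg := hκ.mul_continuousOn (hf.continuousOn.fun_mul hg)
  have hagf := ((ha.fun_mul hg).fun_mul hf.continuousOn_deriv).intervalIntegrable (μ := volume)
  have hbgpf :=
    ((hb.fun_mul hg).fun_mul (hp.mul hf).continuousOn_deriv).intervalIntegrable (μ := volume)
  rw [← integral_add hκfg hagf, ← integral_add (hκfg.add hagf) hbgpf]
  refine integral_congr fun x _ => ?_
  simp only [couplingOp]
  ring

theorem integral_mul_couplingOpAdjoint (hκ : IntervalIntegrable κ volume s t)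
    (ha : ContDiffNear (Set.uIcc s t) a) (hb : ContDiffNear (Set.uIcc s t) b)
    (hp : ContinuousOn p (Set.uIcc s t)) (hf : ContinuousOn f (Set.uIcc s t))
    (hg : ContDiffNear (Set.uIcc s t) g) :
    ∫ x in s..t, f x * couplingOpAdjoint κ a b p g x =
      (∫ x in s..t, κ x * (f x * g x)) - (∫ x in s..t, f x * deriv (fun y => a y * g y) x) -
        ∫ x in s..t, p x * f x * deriv (fun y => b y * g y) x := by
  have hκfg := hκ.mul_continuousOn (hf.fun_mul hg.continuousOn)
  have hfag := (hf.fun_mul (ha.mul hg).continuousOn_deriv).intervalIntegrable (μ := volume)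
  have hpfbg :=
    ((hp.fun_mul hf).fun_mul (hb.mul hg).continuousOn_deriv).intervalIntegrable (μ := volume)
  rw [← integral_sub hκfg hfag, ← integral_sub (hκfg.sub hfag) hpfbg]
  refine integral_congr fun x _ => ?_
  simp only [couplingOpAdjoint]
  ring

theorem integral_mul_couplingOp_eq_integral_mul_couplingOpAdjoint
    (hκ : IntervalIntegrable κ volume s t)
    (ha : ContDiffNear (Set.uIcc s t) a) (hb : ContDiffNear (Set.uIcc s t) b)
    (hp : ContDiffNear (Set.uIcc s t) p) (hf : ContDiffNear (Set.uIcc s t) f)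
    (hg : ContDiffNear (Set.uIcc s t) g) (hgs : g s = 0) (hgt : g t = 0) :
    ∫ x in s..t, g x * couplingOp κ a b p f x =
      ∫ x in s..t, f x * couplingOpAdjoint κ a b p g x := by
  have parts_a : ∫ x in s..t, a x * g x * deriv f x =
      -∫ x in s..t, f x * deriv (fun y => a y * g y) x :=
    integral_mul_deriv_eq_neg_of_eq_zero hf (ha.mul hg) (by simp [hgs]) (by simp [hgt])
  have parts_b : ∫ x in s..t, b x * g x * deriv (fun y => p y * f y) x =
      -∫ x in s..t, p x * f x * deriv (fun y => b y * g y) x :=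
    integral_mul_deriv_eq_neg_of_eq_zero (hp.mul hf) (hb.mul hg) (by simp [hgs]) (by simp [hgt])
  rw [integral_mul_couplingOp hκ ha.continuousOn hb.continuousOn hp hf hg.continuousOn,
    integral_mul_couplingOpAdjoint hκ ha hb hp.continuousOn hf.continuousOn hg, parts_a, parts_b]
  ring

end Coupling

section Interconnection

theorem L2pairing_comm (L : ℝ) (φ ψ : (ℝ → ℝ) × (ℝ → ℝ) × (ℝ → ℝ)) :
    L2pairing L φ ψ = L2pairing L ψ φ := by
  simp only [L2pairing, mul_comm]

/-- `J(z)` with arbitrary coefficient functions: `κ` stands for the friction coefficient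
`(λ / 2d) v|v|`, and `a`, `b` for `e / ρ` and `1 / ρ`. -/
noncomputable def interconnectionOp (κ a b p ψ₁ ψ₂ ψ₃ : ℝ → ℝ) :
    (ℝ → ℝ) × (ℝ → ℝ) × (ℝ → ℝ) :=
  (fun x => -deriv ψ₂ x,
   fun x => -deriv ψ₁ x - couplingOp κ a b p ψ₃ x,
   couplingOpAdjoint κ a b p ψ₂)

theorem Jop_eq_interconnectionOp (lam d : ℝ) (ρ e p v ψ₁ ψ₂ ψ₃ : ℝ → ℝ) :
    Jop lam d ρ e p v ψ₁ ψ₂ ψ₃ =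
      interconnectionOp (fun x => lam / (2 * d) * v x * |v x|) (fun x => e x / ρ x)
        (fun x => 1 / ρ x) p ψ₁ ψ₂ ψ₃ := by
  refine Prod.ext rfl (Prod.ext (funext fun x => ?_) rfl)
  simp only [Jop, interconnectionOp, couplingOp]
  ring

variable {L : ℝ} {κ a b p φ₁ φ₂ φ₃ ψ₁ ψ₂ ψ₃ : ℝ → ℝ}

theorem L2pairing_interconnectionOp (hκ : IntervalIntegrable κ volume 0 L)
    (ha : ContDiffNear (Set.uIcc 0 L) a) (hb : ContDiffNear (Set.uIcc 0 L) b)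
    (hp : ContDiffNear (Set.uIcc 0 L) p)
    (hφ₁ : ContinuousOn φ₁ (Set.uIcc 0 L)) (hφ₂ : ContinuousOn φ₂ (Set.uIcc 0 L))
    (hφ₃ : ContinuousOn φ₃ (Set.uIcc 0 L))
    (hψ₁ : ContDiffNear (Set.uIcc 0 L) ψ₁) (hψ₂ : ContDiffNear (Set.uIcc 0 L) ψ₂)
    (hψ₃ : ContDiffNear (Set.uIcc 0 L) ψ₃) :
    L2pairing L (φ₁, φ₂, φ₃) (interconnectionOp κ a b p ψ₁ ψ₂ ψ₃) =
      (∫ x in 0..L, φ₃ x * couplingOpAdjoint κ a b p ψ₂ x) -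
        (∫ x in 0..L, φ₂ x * couplingOp κ a b p ψ₃ x) -
        (∫ x in 0..L, φ₁ x * deriv ψ₂ x) - ∫ x in 0..L, φ₂ x * deriv ψ₁ x := by
  have h₁₂ := (hφ₁.fun_mul hψ₂.continuousOn_deriv).intervalIntegrable (μ := volume)
  have h₂₁ := (hφ₂.fun_mul hψ₁.continuousOn_deriv).intervalIntegrable (μ := volume)
  have h₂₃ := (intervalIntegrable_couplingOp hκ ha.continuousOn hb.continuousOn hp
    hψ₃).continuousOn_mul hφ₂
  have h₃₂ := (intervalIntegrable_couplingOpAdjoint hκ ha hb hp.continuousOn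
    hψ₂).continuousOn_mul hφ₃
  rw [← integral_sub h₃₂ h₂₃, ← integral_sub (h₃₂.sub h₂₃) h₁₂,
    ← integral_sub ((h₃₂.sub h₂₃).sub h₁₂) h₂₁]
  refine integral_congr fun x _ => ?_
  simp only [interconnectionOp]
  ring

theorem Jop_skew_adjoint_general (hκ : IntervalIntegrable κ volume 0 L)
    (ha : ContDiffNear (Set.uIcc 0 L) a) (hb : ContDiffNear (Set.uIcc 0 L) b)
    (hp : ContDiffNear (Set.uIcc 0 L) p)
    (hφ₁ : ContDiffNear (Set.uIcc 0 L) φ₁) (hφ₂ : ContDiffNear (Set.uIcc 0 L) φ₂)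
    (hφ₃ : ContDiffNear (Set.uIcc 0 L) φ₃)
    (hψ₁ : ContDiffNear (Set.uIcc 0 L) ψ₁) (hψ₂ : ContDiffNear (Set.uIcc 0 L) ψ₂)
    (hψ₃ : ContDiffNear (Set.uIcc 0 L) ψ₃)
    (hφ₂0 : φ₂ 0 = 0) (hφ₂L : φ₂ L = 0) (hψ₂0 : ψ₂ 0 = 0) (hψ₂L : ψ₂ L = 0) :
    L2pairing L (φ₁, φ₂, φ₃) (interconnectionOp κ a b p ψ₁ ψ₂ ψ₃) =
      -L2pairing L (interconnectionOp κ a b p φ₁ φ₂ φ₃) (ψ₁, ψ₂, ψ₃) := by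
  rw [L2pairing_comm L (interconnectionOp κ a b p φ₁ φ₂ φ₃),
    L2pairing_interconnectionOp hκ ha hb hp hφ₁.continuousOn hφ₂.continuousOn hφ₃.continuousOn
      hψ₁ hψ₂ hψ₃,
    L2pairing_interconnectionOp hκ ha hb hp hψ₁.continuousOn hψ₂.continuousOn hψ₃.continuousOn
      hφ₁ hφ₂ hφ₃,
    integral_mul_deriv_eq_neg_of_eq_zero hψ₁ hφ₂ hφ₂0 hφ₂L,
    integral_mul_deriv_eq_neg_of_eq_zero hφ₁ hψ₂ hψ₂0 hψ₂L,
    integral_mul_couplingOp_eq_integral_mul_couplingOpAdjoint hκ ha hb hp hψ₃ hφ₂ hφ₂0 hφ₂L,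
    integral_mul_couplingOp_eq_integral_mul_couplingOpAdjoint hκ ha hb hp hφ₃ hψ₂ hψ₂0 hψ₂L]
  ring

end Interconnection

/-- if the C¹ triples `φ` and `ψ` vanish at both endpoints of the pipe
(so that all boundary terms vanish), then `J(z)` is skew-adjoint in the L² inner
product: `(φ, J(z)ψ) = −(J(z)φ, ψ)`. -/
theorem Jop_skew_adjoint
    (L lam d : ℝ) (hL : 0 < L) (hd : d ≠ 0)
    (ρ e p : ℝ → ℝ) (hρ : ContDiff ℝ 1 ρ) (he : ContDiff ℝ 1 e) (hp : ContDiff ℝ 1 p)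
    (hρ0 : ∀ x ∈ Set.Icc (0:ℝ) L, ρ x ≠ 0)
    (v : ℝ → ℝ) (hv : Continuous v)
    (φ₁ φ₂ φ₃ ψ₁ ψ₂ ψ₃ : ℝ → ℝ)
    (hφ₁ : ContDiff ℝ 1 φ₁) (hφ₂ : ContDiff ℝ 1 φ₂) (hφ₃ : ContDiff ℝ 1 φ₃)
    (hψ₁ : ContDiff ℝ 1 ψ₁) (hψ₂ : ContDiff ℝ 1 ψ₂) (hψ₃ : ContDiff ℝ 1 ψ₃)
    (hφ₁0 : φ₁ 0 = 0) (hφ₂0 : φ₂ 0 = 0) (hφ₃0 : φ₃ 0 = 0)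
    (hφ₁L : φ₁ L = 0) (hφ₂L : φ₂ L = 0) (hφ₃L : φ₃ L = 0)
    (hψ₁0 : ψ₁ 0 = 0) (hψ₂0 : ψ₂ 0 = 0) (hψ₃0 : ψ₃ 0 = 0)
    (hψ₁L : ψ₁ L = 0) (hψ₂L : ψ₂ L = 0) (hψ₃L : ψ₃ L = 0) :
    L2pairing L (φ₁, φ₂, φ₃) (Jop lam d ρ e p v ψ₁ ψ₂ ψ₃)
      = -(L2pairing L (Jop lam d ρ e p v φ₁ φ₂ φ₃) (ψ₁, ψ₂, ψ₃)) := by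
  rw [← Set.uIcc_of_le hL.le] at hρ0
  have hκ : Continuous fun x => lam / (2 * d) * v x * |v x| := by fun_prop
  simp only [Jop_eq_interconnectionOp]
  exact Jop_skew_adjoint_general (hκ.intervalIntegrable 0 L)
    (.div (.of_contDiff he) (.of_contDiff hρ) hρ0)
    (.div (.of_contDiff contDiff_const) (.of_contDiff hρ) hρ0) (.of_contDiff hp)
    (.of_contDiff hφ₁) (.of_contDiff hφ₂) (.of_contDiff hφ₃)
    (.of_contDiff hψ₁) (.of_contDiff hψ₂) (.of_contDiff hψ₃) hφ₂0 hφ₂L hψ₂0 hψ₂L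
end

section
/- For all C¹ triples e₁ = (e₁₁,e₁₂,e₁₃) and e₂ = (e₂₁,e₂₂,e₂₃) on [0,L], the bilinear boundary identity (e₁, J(z)e₂) + (J(z)e₁, e₂) = [e₁(x)ᵀ Q(z)(x) e₂(x)]₀ᴸ holds, i.e. the left-hand side equals e₁(L)ᵀQ(z)(L)e₂(L) − e₁(0)ᵀQ(z)(0)e₂(0). -/
open MeasureTheory intervalIntegral Matrix

/-- The boundary matrix `Q(z)(x) = [[0,−1,0],[−1,0,−(e+p)/ρ],[0,−(e+p)/ρ,0]]`. -/
noncomputable def Qmat (ρ e p : ℝ → ℝ) (x : ℝ) : Matrix (Fin 3) (Fin 3) ℝ :=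
  !![0, -1, 0;
     -1, 0, -((e x + p x) / ρ x);
     0, -((e x + p x) / ρ x), 0]

/-!
Up to the zeroth-order friction terms, which cancel by skew-symmetry, `φ · Jψ + Jφ · ψ` is minus a
sum of Leibniz expressions `∂u · w + u · ∂w`. The coefficients in `J` are arranged so that this
holds without expanding any derivative: the pairs `(u, w)` are `(φ₂, ψ₁)`, `((e/ρ) φ₂, ψ₃)`,
`((1/ρ) φ₂, p ψ₃)` and those with `φ` and `ψ` exchanged. Each expression integrates to the boundary
values of `u · w` as soon as `u` and `w` are absolutely continuous.
-/

theorem absolutelyContinuousOnInterval_of_dist_le_mul {X Y : Type*} [PseudoMetricSpace X]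
    [PseudoMetricSpace Y] {f : ℝ → X} {g : ℝ → Y} {a b K : ℝ}
    (hf : AbsolutelyContinuousOnInterval f a b)
    (hfg : ∀ x ∈ Set.uIcc a b, ∀ y ∈ Set.uIcc a b, dist (g x) (g y) ≤ K * dist (f x) (f y)) :
    AbsolutelyContinuousOnInterval g a b := by
  refine squeeze_zero' (.of_forall fun _ => Finset.sum_nonneg fun _ _ => dist_nonneg) ?_
    (by simpa only [mul_zero] using Filter.Tendsto.const_mul K hf)
  filter_upwards [Filter.mem_inf_of_right (Filter.mem_principal_self _)] with E hE
  rw [Finset.mul_sum]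
  exact Finset.sum_le_sum fun i hi => hfg _ (hE.1 i hi).1 _ (hE.1 i hi).2

theorem absolutelyContinuousOnInterval_inv₀ {𝕜 : Type*} [NormedDivisionRing 𝕜] {f : ℝ → 𝕜}
    {a b : ℝ} (hf : AbsolutelyContinuousOnInterval f a b) (hf0 : ∀ x ∈ Set.uIcc a b, f x ≠ 0) :
    AbsolutelyContinuousOnInterval (fun x => (f x)⁻¹) a b := by
  obtain ⟨C, hC⟩ : ∃ C, ∀ x ∈ Set.uIcc a b, ‖(f x)⁻¹‖ ≤ C :=
    isCompact_uIcc.exists_bound_of_continuousOn (hf.continuousOn.inv₀ hf0)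
  refine absolutelyContinuousOnInterval_of_dist_le_mul (K := C * C) hf fun x hx y hy => ?_
  have hC0 : 0 ≤ C := (norm_nonneg _).trans (hC x hx)
  calc dist (f x)⁻¹ (f y)⁻¹ = ‖(f x)⁻¹‖ * ‖(f y)⁻¹‖ * dist (f x) (f y) := by
        rw [dist_inv_inv₀ (hf0 x hx) (hf0 y hy), norm_inv, norm_inv]
        ring
    _ ≤ C * C * dist (f x) (f y) := by
        gcongr
        exacts [hC x hx, hC y hy]

theorem absolutelyContinuousOnInterval_div {f g : ℝ → ℝ} {a b : ℝ}
    (hf : AbsolutelyContinuousOnInterval f a b) (hg : AbsolutelyContinuousOnInterval g a b)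
    (hg0 : ∀ x ∈ Set.uIcc a b, g x ≠ 0) :
    AbsolutelyContinuousOnInterval (fun x => f x / g x) a b := by
  simpa only [div_eq_mul_inv] using hf.fun_mul (absolutelyContinuousOnInterval_inv₀ hg hg0)

theorem absolutelyContinuousOnInterval_one_div {f : ℝ → ℝ} {a b : ℝ}
    (hf : AbsolutelyContinuousOnInterval f a b) (hf0 : ∀ x ∈ Set.uIcc a b, f x ≠ 0) :
    AbsolutelyContinuousOnInterval (fun x => 1 / f x) a b := by
  simpa only [one_div] using absolutelyContinuousOnInterval_inv₀ hf hf0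

theorem intervalIntegrable_deriv_mul_add_mul_deriv {f g : ℝ → ℝ} {a b : ℝ}
    (hf : AbsolutelyContinuousOnInterval f a b) (hg : AbsolutelyContinuousOnInterval g a b) :
    IntervalIntegrable (fun x => deriv f x * g x + f x * deriv g x) volume a b :=
  (hf.intervalIntegrable_deriv.mul_continuousOn hg.continuousOn).add
    (hg.intervalIntegrable_deriv.continuousOn_mul hf.continuousOn)

/-- The pointwise inner product of two triples of functions, i.e. the integrand of `L2pairing`. -/
def pairingDensity (φ ψ : (ℝ → ℝ) × (ℝ → ℝ) × (ℝ → ℝ)) (x : ℝ) : ℝ :=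
  φ.1 x * ψ.1 x + φ.2.1 x * ψ.2.1 x + φ.2.2 x * ψ.2.2 x

theorem pairingDensity_comm (φ ψ : (ℝ → ℝ) × (ℝ → ℝ) × (ℝ → ℝ)) :
    pairingDensity φ ψ = pairingDensity ψ φ := by
  funext x
  simp only [pairingDensity, mul_comm]

theorem intervalIntegrable_pairingDensity {φ ψ : (ℝ → ℝ) × (ℝ → ℝ) × (ℝ → ℝ)} {a b : ℝ}
    (hφ₁ : ContinuousOn φ.1 (Set.uIcc a b)) (hφ₂ : ContinuousOn φ.2.1 (Set.uIcc a b))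
    (hφ₃ : ContinuousOn φ.2.2 (Set.uIcc a b)) (hψ₁ : IntervalIntegrable ψ.1 volume a b)
    (hψ₂ : IntervalIntegrable ψ.2.1 volume a b) (hψ₃ : IntervalIntegrable ψ.2.2 volume a b) :
    IntervalIntegrable (pairingDensity φ ψ) volume a b :=
  ((hψ₁.continuousOn_mul hφ₁).add (hψ₂.continuousOn_mul hφ₂)).add (hψ₃.continuousOn_mul hφ₃)

/-- One half of the boundary form: `φᵀ Q(z) ψ` is minus the sum of `boundaryFlux` and its version
with `φ` and `ψ` exchanged. It depends only on `φ₂`, `ψ₁` and `ψ₃`. -/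
noncomputable def boundaryFlux (ρ e p φ₂ ψ₁ ψ₃ : ℝ → ℝ) (x : ℝ) : ℝ :=
  φ₂ x * ψ₁ x + (e x + p x) / ρ x * (φ₂ x * ψ₃ x)

/-- The derivative of `boundaryFlux`, as the Leibniz rule gives it for the products `φ₂ · ψ₁`,
`(e/ρ) φ₂ · ψ₃` and `(1/ρ) φ₂ · p ψ₃`. Only these factors are differentiated, which are also the
functions differentiated in `Jop`. -/
noncomputable def boundaryFluxDeriv (ρ e p φ₂ ψ₁ ψ₃ : ℝ → ℝ) (x : ℝ) : ℝ :=
  (deriv φ₂ x * ψ₁ x + φ₂ x * deriv ψ₁ x)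
    + (deriv (fun y => e y / ρ y * φ₂ y) x * ψ₃ x + e x / ρ x * φ₂ x * deriv ψ₃ x)
    + (deriv (fun y => 1 / ρ y * φ₂ y) x * (p x * ψ₃ x)
      + 1 / ρ x * φ₂ x * deriv (fun y => p y * ψ₃ y) x)

theorem dotProduct_Qmat_mulVec (ρ e p φ₁ φ₂ φ₃ ψ₁ ψ₂ ψ₃ : ℝ → ℝ) (x : ℝ) :
    ![φ₁ x, φ₂ x, φ₃ x] ⬝ᵥ (Qmat ρ e p x).mulVec ![ψ₁ x, ψ₂ x, ψ₃ x]
      = -(boundaryFlux ρ e p φ₂ ψ₁ ψ₃ x + boundaryFlux ρ e p ψ₂ φ₁ φ₃ x) := by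
  simp only [Qmat, boundaryFlux, mulVec, dotProduct, Fin.sum_univ_three, of_apply, cons_val]
  ring

theorem pairingDensity_Jop_add_pairingDensity_Jop (lam d : ℝ)
    (ρ e p v φ₁ φ₂ φ₃ ψ₁ ψ₂ ψ₃ : ℝ → ℝ) (x : ℝ) :
    pairingDensity (φ₁, φ₂, φ₃) (Jop lam d ρ e p v ψ₁ ψ₂ ψ₃) x
        + pairingDensity (Jop lam d ρ e p v φ₁ φ₂ φ₃) (ψ₁, ψ₂, ψ₃) x
      = -(boundaryFluxDeriv ρ e p φ₂ ψ₁ ψ₃ x + boundaryFluxDeriv ρ e p ψ₂ φ₁ φ₃ x) := by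
  simp only [pairingDensity, Jop, boundaryFluxDeriv]
  ring

section AbsolutelyContinuous

variable {lam d a b : ℝ} {ρ e p v φ₂ ψ₁ ψ₂ ψ₃ : ℝ → ℝ}

theorem intervalIntegrable_boundaryFluxDeriv (hρ : AbsolutelyContinuousOnInterval ρ a b)
    (he : AbsolutelyContinuousOnInterval e a b) (hp : AbsolutelyContinuousOnInterval p a b)
    (hρ0 : ∀ x ∈ Set.uIcc a b, ρ x ≠ 0) (hφ₂ : AbsolutelyContinuousOnInterval φ₂ a b)
    (hψ₁ : AbsolutelyContinuousOnInterval ψ₁ a b) (hψ₃ : AbsolutelyContinuousOnInterval ψ₃ a b) :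
    IntervalIntegrable (boundaryFluxDeriv ρ e p φ₂ ψ₁ ψ₃) volume a b :=
  ((intervalIntegrable_deriv_mul_add_mul_deriv hφ₂ hψ₁).add
    (intervalIntegrable_deriv_mul_add_mul_deriv
      ((absolutelyContinuousOnInterval_div he hρ hρ0).fun_mul hφ₂) hψ₃)).add
    (intervalIntegrable_deriv_mul_add_mul_deriv
      ((absolutelyContinuousOnInterval_one_div hρ hρ0).fun_mul hφ₂) (hp.fun_mul hψ₃))

theorem integral_boundaryFluxDeriv (hρ : AbsolutelyContinuousOnInterval ρ a b)
    (he : AbsolutelyContinuousOnInterval e a b) (hp : AbsolutelyContinuousOnInterval p a b)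
    (hρ0 : ∀ x ∈ Set.uIcc a b, ρ x ≠ 0) (hφ₂ : AbsolutelyContinuousOnInterval φ₂ a b)
    (hψ₁ : AbsolutelyContinuousOnInterval ψ₁ a b) (hψ₃ : AbsolutelyContinuousOnInterval ψ₃ a b) :
    ∫ x in a..b, boundaryFluxDeriv ρ e p φ₂ ψ₁ ψ₃ x
      = boundaryFlux ρ e p φ₂ ψ₁ ψ₃ b - boundaryFlux ρ e p φ₂ ψ₁ ψ₃ a := by
  have heρφ₂ := (absolutelyContinuousOnInterval_div he hρ hρ0).fun_mul hφ₂
  have hρφ₂ := (absolutelyContinuousOnInterval_one_div hρ hρ0).fun_mul hφ₂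
  have hpψ₃ := hp.fun_mul hψ₃
  have hint₁ := intervalIntegrable_deriv_mul_add_mul_deriv hφ₂ hψ₁
  have hint₂ := intervalIntegrable_deriv_mul_add_mul_deriv heρφ₂ hψ₃
  have hint₃ := intervalIntegrable_deriv_mul_add_mul_deriv hρφ₂ hpψ₃
  simp only [boundaryFluxDeriv]
  rw [integral_add (hint₁.add hint₂) hint₃, integral_add hint₁ hint₂,
    hφ₂.integral_deriv_mul_eq_sub hψ₁, heρφ₂.integral_deriv_mul_eq_sub hψ₃,
    hρφ₂.integral_deriv_mul_eq_sub hpψ₃]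
  simp only [boundaryFlux]
  ring

theorem intervalIntegrable_Jop_snd_fst (hρ : ContinuousOn ρ (Set.uIcc a b))
    (he : ContinuousOn e (Set.uIcc a b)) (hp : AbsolutelyContinuousOnInterval p a b)
    (hρ0 : ∀ x ∈ Set.uIcc a b, ρ x ≠ 0)
    (hv : IntervalIntegrable (fun x => v x * |v x|) volume a b)
    (hψ₁ : AbsolutelyContinuousOnInterval ψ₁ a b) (hψ₃ : AbsolutelyContinuousOnInterval ψ₃ a b) :
    IntervalIntegrable (Jop lam d ρ e p v ψ₁ ψ₂ ψ₃).2.1 volume a b := by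
  have hfriction : IntervalIntegrable (fun x => lam / (2 * d) * v x * |v x| * ψ₃ x) volume a b := by
    simpa only [mul_assoc] using (hv.const_mul (lam / (2 * d))).mul_continuousOn hψ₃.continuousOn
  have hadvection : IntervalIntegrable (fun x => e x / ρ x * deriv ψ₃ x) volume a b :=
    hψ₃.intervalIntegrable_deriv.continuousOn_mul (he.div hρ hρ0)
  have hpressure : IntervalIntegrable (fun x => 1 / ρ x * deriv (fun y => p y * ψ₃ y) x)
      volume a b :=
    (hp.fun_mul hψ₃).intervalIntegrable_deriv.continuousOn_mul (continuousOn_const.div hρ hρ0)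
  exact ((hψ₁.intervalIntegrable_deriv.neg.sub hfriction).sub hadvection).sub hpressure

theorem intervalIntegrable_Jop_snd_snd (hρ : AbsolutelyContinuousOnInterval ρ a b)
    (he : AbsolutelyContinuousOnInterval e a b) (hp : ContinuousOn p (Set.uIcc a b))
    (hρ0 : ∀ x ∈ Set.uIcc a b, ρ x ≠ 0)
    (hv : IntervalIntegrable (fun x => v x * |v x|) volume a b)
    (hψ₂ : AbsolutelyContinuousOnInterval ψ₂ a b) :
    IntervalIntegrable (Jop lam d ρ e p v ψ₁ ψ₂ ψ₃).2.2 volume a b := by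
  have hfriction : IntervalIntegrable (fun x => lam / (2 * d) * v x * |v x| * ψ₂ x) volume a b := by
    simpa only [mul_assoc] using (hv.const_mul (lam / (2 * d))).mul_continuousOn hψ₂.continuousOn
  have hadvection : IntervalIntegrable (deriv fun y => e y / ρ y * ψ₂ y) volume a b :=
    ((absolutelyContinuousOnInterval_div he hρ hρ0).fun_mul hψ₂).intervalIntegrable_deriv
  have hpressure : IntervalIntegrable (fun x => p x * deriv (fun y => 1 / ρ y * ψ₂ y) x)
      volume a b :=
    ((absolutelyContinuousOnInterval_one_div hρ hρ0).fun_mul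
      hψ₂).intervalIntegrable_deriv.continuousOn_mul hp
  exact (hfriction.sub hadvection).sub hpressure

theorem intervalIntegrable_pairingDensity_Jop {φ : (ℝ → ℝ) × (ℝ → ℝ) × (ℝ → ℝ)}
    (hρ : AbsolutelyContinuousOnInterval ρ a b) (he : AbsolutelyContinuousOnInterval e a b)
    (hp : AbsolutelyContinuousOnInterval p a b) (hρ0 : ∀ x ∈ Set.uIcc a b, ρ x ≠ 0)
    (hv : IntervalIntegrable (fun x => v x * |v x|) volume a b)
    (hφ₁ : ContinuousOn φ.1 (Set.uIcc a b)) (hφ₂ : ContinuousOn φ.2.1 (Set.uIcc a b))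
    (hφ₃ : ContinuousOn φ.2.2 (Set.uIcc a b)) (hψ₁ : AbsolutelyContinuousOnInterval ψ₁ a b)
    (hψ₂ : AbsolutelyContinuousOnInterval ψ₂ a b) (hψ₃ : AbsolutelyContinuousOnInterval ψ₃ a b) :
    IntervalIntegrable (pairingDensity φ (Jop lam d ρ e p v ψ₁ ψ₂ ψ₃)) volume a b :=
  intervalIntegrable_pairingDensity hφ₁ hφ₂ hφ₃ hψ₂.intervalIntegrable_deriv.neg
    (intervalIntegrable_Jop_snd_fst hρ.continuousOn he.continuousOn hp hρ0 hv hψ₁ hψ₃)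
    (intervalIntegrable_Jop_snd_snd hρ he hp.continuousOn hρ0 hv hψ₂)

end AbsolutelyContinuous

theorem Jop_boundary_identity_general {L lam d : ℝ} {ρ e p v φ₁ φ₂ φ₃ ψ₁ ψ₂ ψ₃ : ℝ → ℝ}
    (hρ : AbsolutelyContinuousOnInterval ρ 0 L) (he : AbsolutelyContinuousOnInterval e 0 L)
    (hp : AbsolutelyContinuousOnInterval p 0 L) (hρ0 : ∀ x ∈ Set.uIcc 0 L, ρ x ≠ 0)
    (hv : IntervalIntegrable (fun x => v x * |v x|) volume 0 L)
    (hφ₁ : AbsolutelyContinuousOnInterval φ₁ 0 L) (hφ₂ : AbsolutelyContinuousOnInterval φ₂ 0 L)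
    (hφ₃ : AbsolutelyContinuousOnInterval φ₃ 0 L) (hψ₁ : AbsolutelyContinuousOnInterval ψ₁ 0 L)
    (hψ₂ : AbsolutelyContinuousOnInterval ψ₂ 0 L) (hψ₃ : AbsolutelyContinuousOnInterval ψ₃ 0 L) :
    L2pairing L (φ₁, φ₂, φ₃) (Jop lam d ρ e p v ψ₁ ψ₂ ψ₃)
      + L2pairing L (Jop lam d ρ e p v φ₁ φ₂ φ₃) (ψ₁, ψ₂, ψ₃)
      = ![φ₁ L, φ₂ L, φ₃ L] ⬝ᵥ (Qmat ρ e p L).mulVec ![ψ₁ L, ψ₂ L, ψ₃ L]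
        - ![φ₁ 0, φ₂ 0, φ₃ 0] ⬝ᵥ (Qmat ρ e p 0).mulVec ![ψ₁ 0, ψ₂ 0, ψ₃ 0] := by
  have hφJψ : IntervalIntegrable
      (pairingDensity (φ₁, φ₂, φ₃) (Jop lam d ρ e p v ψ₁ ψ₂ ψ₃)) volume 0 L :=
    intervalIntegrable_pairingDensity_Jop hρ he hp hρ0 hv
      hφ₁.continuousOn hφ₂.continuousOn hφ₃.continuousOn hψ₁ hψ₂ hψ₃
  have hJφψ : IntervalIntegrable
      (pairingDensity (Jop lam d ρ e p v φ₁ φ₂ φ₃) (ψ₁, ψ₂, ψ₃)) volume 0 L := by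
    rw [pairingDensity_comm]
    exact intervalIntegrable_pairingDensity_Jop hρ he hp hρ0 hv
      hψ₁.continuousOn hψ₂.continuousOn hψ₃.continuousOn hφ₁ hφ₂ hφ₃
  calc _ = ∫ x in (0 : ℝ)..L, (pairingDensity (φ₁, φ₂, φ₃) (Jop lam d ρ e p v ψ₁ ψ₂ ψ₃) x
          + pairingDensity (Jop lam d ρ e p v φ₁ φ₂ φ₃) (ψ₁, ψ₂, ψ₃) x) :=
        (integral_add hφJψ hJφψ).symm
    _ = -((∫ x in (0 : ℝ)..L, boundaryFluxDeriv ρ e p φ₂ ψ₁ ψ₃ x)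
          + ∫ x in (0 : ℝ)..L, boundaryFluxDeriv ρ e p ψ₂ φ₁ φ₃ x) := by
        simp only [pairingDensity_Jop_add_pairingDensity_Jop]
        rw [intervalIntegral.integral_neg, integral_add
          (intervalIntegrable_boundaryFluxDeriv hρ he hp hρ0 hφ₂ hψ₁ hψ₃)
          (intervalIntegrable_boundaryFluxDeriv hρ he hp hρ0 hψ₂ hφ₁ hφ₃)]
    _ = _ := by
        rw [integral_boundaryFluxDeriv hρ he hp hρ0 hφ₂ hψ₁ hψ₃,
          integral_boundaryFluxDeriv hρ he hp hρ0 hψ₂ hφ₁ hφ₃,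
          dotProduct_Qmat_mulVec, dotProduct_Qmat_mulVec]
        ring

/-- for all C¹ triples `e₁`, `e₂` on `[0,L]` the bilinear boundary identity
`(e₁, J(z)e₂) + (J(z)e₁, e₂) = [e₁ᵀ Q(z) e₂]₀ᴸ` holds. -/
theorem Jop_boundary_identity
    (L lam d : ℝ) (hL : 0 < L) (hd : d ≠ 0)
    (ρ e p : ℝ → ℝ) (hρ : ContDiff ℝ 1 ρ) (he : ContDiff ℝ 1 e) (hp : ContDiff ℝ 1 p)
    (hρ0 : ∀ x ∈ Set.Icc (0:ℝ) L, ρ x ≠ 0)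
    (v : ℝ → ℝ) (hv : Continuous v)
    (e₁₁ e₁₂ e₁₃ e₂₁ e₂₂ e₂₃ : ℝ → ℝ)
    (h₁₁ : ContDiff ℝ 1 e₁₁) (h₁₂ : ContDiff ℝ 1 e₁₂) (h₁₃ : ContDiff ℝ 1 e₁₃)
    (h₂₁ : ContDiff ℝ 1 e₂₁) (h₂₂ : ContDiff ℝ 1 e₂₂) (h₂₃ : ContDiff ℝ 1 e₂₃) :
    L2pairing L (e₁₁, e₁₂, e₁₃) (Jop lam d ρ e p v e₂₁ e₂₂ e₂₃)
      + L2pairing L (Jop lam d ρ e p v e₁₁ e₁₂ e₁₃) (e₂₁, e₂₂, e₂₃)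
      = ![e₁₁ L, e₁₂ L, e₁₃ L] ⬝ᵥ (Qmat ρ e p L).mulVec ![e₂₁ L, e₂₂ L, e₂₃ L]
        - ![e₁₁ 0, e₁₂ 0, e₁₃ 0] ⬝ᵥ (Qmat ρ e p 0).mulVec ![e₂₁ 0, e₂₂ 0, e₂₃ 0] := by
  have hac {f : ℝ → ℝ} (hf : ContDiff ℝ 1 f) : AbsolutelyContinuousOnInterval f 0 L :=
    hf.contDiffOn.absolutelyContinuousOnInterval
  exact Jop_boundary_identity_general (hac hρ) (hac he) (hac hp) (Set.uIcc_of_le hL.le ▸ hρ0)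
    ((hv.mul hv.abs).intervalIntegrable 0 L)
    (hac h₁₁) (hac h₁₂) (hac h₁₃) (hac h₂₁) (hac h₂₂) (hac h₂₃)
end

section
/- For every C¹ triple e_S on [0,L], the power-balance identity holds: ∫₀ᴸ e_S(x)·(J(z)e_S)(x) dx = f_B[e_S]|_L·e_B[e_S]|_L + f_B[e_S]|_0·e_B[e_S]|_0, i.e. the energy exchanged through the skew-adjoint interconnection operator is exactly accounted for by the boundary port variables. -/
open MeasureTheory intervalIntegral

/-!
Grouping the power flux as
`ψ₂ (ψ₁ + (e + p)/ρ ψ₃) = ψ₁ ψ₂ + ((e/ρ) ψ₂) ψ₃ + ((1/ρ) ψ₂) (p ψ₃)`, the product rule applied to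
the three summands gives precisely the differential terms of `-ψ · (J(z)ψ)`, while the two friction
terms cancel. The power density is therefore minus the derivative of the flux, and the fundamental
theorem of calculus leaves only the boundary terms.
-/

/-- The power density `ψ · (J(z)ψ)`: the pointwise dot product of the triple
`ψ = (ψ₁, ψ₂, ψ₃)` with its image under the interconnection operator. -/
noncomputable def powerDensity (lam d : ℝ) (ρ e p v ψ₁ ψ₂ ψ₃ : ℝ → ℝ) (x : ℝ) : ℝ :=
  ψ₁ x * (Jop lam d ρ e p v ψ₁ ψ₂ ψ₃).1 x
    + ψ₂ x * (Jop lam d ρ e p v ψ₁ ψ₂ ψ₃).2.1 x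
    + ψ₃ x * (Jop lam d ρ e p v ψ₁ ψ₂ ψ₃).2.2 x

/-- The effort port variable `e_B[ψ]`, as a function of the point of evaluation. The
conjugate flow `f_B[ψ]` is `-ψ₂` at the right endpoint and `ψ₂` at the left one, so
`ψ₂ * portEffort` is the power flux. -/
noncomputable def portEffort (ρ e p ψ₁ ψ₃ : ℝ → ℝ) (x : ℝ) : ℝ :=
  ψ₁ x + (e x + p x) / ρ x * ψ₃ x

section PowerFlux

variable {ρ e p ψ₁ ψ₂ ψ₃ : ℝ → ℝ}

theorem hasDerivAt_mul_portEffort (lam d : ℝ) (v : ℝ → ℝ) {x : ℝ}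
    (hρ : DifferentiableAt ℝ ρ x) (he : DifferentiableAt ℝ e x) (hp : DifferentiableAt ℝ p x)
    (hρ0 : ρ x ≠ 0) (h₁ : DifferentiableAt ℝ ψ₁ x) (h₂ : DifferentiableAt ℝ ψ₂ x)
    (h₃ : DifferentiableAt ℝ ψ₃ x) :
    HasDerivAt (fun y => ψ₂ y * portEffort ρ e p ψ₁ ψ₃ y)
      (-powerDensity lam d ρ e p v ψ₁ ψ₂ ψ₃ x) x := by
  have h_energy : DifferentiableAt ℝ (fun y => e y / ρ y * ψ₂ y) x := (he.div hρ hρ0).mul h₂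
  have h_volume : DifferentiableAt ℝ (fun y => 1 / ρ y * ψ₂ y) x :=
    ((differentiableAt_const 1).div hρ hρ0).mul h₂
  have h_pressure : DifferentiableAt ℝ (fun y => p y * ψ₃ y) x := hp.mul h₃
  have flux_eq : (fun y => ψ₂ y * portEffort ρ e p ψ₁ ψ₃ y) = fun y =>
      ψ₁ y * ψ₂ y + (e y / ρ y * ψ₂ y) * ψ₃ y + (1 / ρ y * ψ₂ y) * (p y * ψ₃ y) := by
    funext y
    simp only [portEffort]
    ring
  rw [flux_eq]
  refine (((h₁.hasDerivAt.mul h₂.hasDerivAt).add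
    (h_energy.hasDerivAt.mul h₃.hasDerivAt)).add
    (h_volume.hasDerivAt.mul h_pressure.hasDerivAt)).congr_deriv ?_
  simp only [powerDensity, Jop]
  ring

theorem contDiffOn_portEffort {n : WithTop ℕ∞} {s : Set ℝ}
    (hρ : ContDiffOn ℝ n ρ s) (he : ContDiffOn ℝ n e s) (hp : ContDiffOn ℝ n p s)
    (hρ0 : ∀ x ∈ s, ρ x ≠ 0) (h₁ : ContDiffOn ℝ n ψ₁ s) (h₃ : ContDiffOn ℝ n ψ₃ s) :
    ContDiffOn ℝ n (portEffort ρ e p ψ₁ ψ₃) s :=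
  h₁.add (((he.add hp).div hρ hρ0).mul h₃)

/-- At the endpoints the `deriv`s in `Jop` may take their junk value; the integral does not see
these two points. -/
theorem Jop_power_balance_general (lam d : ℝ) (v : ℝ → ℝ) {a b : ℝ}
    (hρ : ContDiffOn ℝ 1 ρ (Set.uIcc a b)) (he : ContDiffOn ℝ 1 e (Set.uIcc a b))
    (hp : ContDiffOn ℝ 1 p (Set.uIcc a b)) (hρ0 : ∀ x ∈ Set.uIcc a b, ρ x ≠ 0)
    (h₁ : ContDiffOn ℝ 1 ψ₁ (Set.uIcc a b)) (h₂ : ContDiffOn ℝ 1 ψ₂ (Set.uIcc a b))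
    (h₃ : ContDiffOn ℝ 1 ψ₃ (Set.uIcc a b)) :
    ∫ x in a..b, powerDensity lam d ρ e p v ψ₁ ψ₂ ψ₃ x
      = -ψ₂ b * portEffort ρ e p ψ₁ ψ₃ b + ψ₂ a * portEffort ρ e p ψ₁ ψ₃ a := by
  have flux_contDiffOn :
      ContDiffOn ℝ 1 (fun x => ψ₂ x * portEffort ρ e p ψ₁ ψ₃ x) (Set.uIcc a b) :=
    h₂.mul (contDiffOn_portEffort hρ he hp hρ0 h₁ h₃)
  have density_eq : Set.EqOn (powerDensity lam d ρ e p v ψ₁ ψ₂ ψ₃)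
      (fun x => -deriv (fun y => ψ₂ y * portEffort ρ e p ψ₁ ψ₃ y) x) (Set.uIoo a b) := by
    intro x hx
    have differentiableAt {f : ℝ → ℝ} (hf : ContDiffOn ℝ 1 f (Set.uIcc a b)) :
        DifferentiableAt ℝ f x :=
      (hf.contDiffAt (Icc_mem_nhds hx.1 hx.2)).differentiableAt one_ne_zero
    have flux_deriv := hasDerivAt_mul_portEffort lam d v (differentiableAt hρ)
      (differentiableAt he) (differentiableAt hp) (hρ0 x (Set.uIoo_subset_uIcc_self hx))
      (differentiableAt h₁) (differentiableAt h₂) (differentiableAt h₃)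
    simp only [flux_deriv.deriv, neg_neg]
  rw [integral_congr_uIoo density_eq, intervalIntegral.integral_neg,
    integral_deriv_of_contDiffOn_uIcc flux_contDiffOn]
  ring

end PowerFlux

/-- power balance for the skew-adjoint interconnection operator `J(z)`:
for every C¹ triple `e_S = (eS₁, eS₂, eS₃)` on `[0,L]`,
`∫₀ᴸ e_S·(J(z)e_S) dx = f_B|_L · e_B|_L + f_B|_0 · e_B|_0`, where
`f_B|_L = −eS₂(L)`, `e_B|_L = eS₁(L) + ((e+p)/ρ)(L)·eS₃(L)`,
`f_B|_0 = eS₂(0)`,  `e_B|_0 = eS₁(0) + ((e+p)/ρ)(0)·eS₃(0)`. -/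
theorem Jop_power_balance
    (L lam d : ℝ) (hL : 0 < L) (hd : d ≠ 0)
    (ρ e p : ℝ → ℝ) (hρ : ContDiff ℝ 1 ρ) (he : ContDiff ℝ 1 e) (hp : ContDiff ℝ 1 p)
    (hρ0 : ∀ x ∈ Set.Icc (0:ℝ) L, ρ x ≠ 0)
    (v : ℝ → ℝ) (hv : Continuous v)
    (eS₁ eS₂ eS₃ : ℝ → ℝ)
    (h₁ : ContDiff ℝ 1 eS₁) (h₂ : ContDiff ℝ 1 eS₂) (h₃ : ContDiff ℝ 1 eS₃) :
    (∫ x in (0:ℝ)..L,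
        (eS₁ x * (Jop lam d ρ e p v eS₁ eS₂ eS₃).1 x
          + eS₂ x * (Jop lam d ρ e p v eS₁ eS₂ eS₃).2.1 x
          + eS₃ x * (Jop lam d ρ e p v eS₁ eS₂ eS₃).2.2 x))
      = (-eS₂ L) * (eS₁ L + (e L + p L) / ρ L * eS₃ L)
        + eS₂ 0 * (eS₁ 0 + (e 0 + p 0) / ρ 0 * eS₃ 0) := by
  rw [← Set.uIcc_of_le hL.le] at hρ0
  exact Jop_power_balance_general lam d v hρ.contDiffOn he.contDiffOn hp.contDiffOn hρ0
    h₁.contDiffOn h₂.contDiffOn h₃.contDiffOn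
end

section
/- (Local energy balance with friction cancellation.) Let ρ, v, e : U → ℝ be differentiable on an open set U ⊆ ℝ², with ρ > 0 on U, and set p = (R_s/c_v)·e, T = e/(c_v·ρ), and total energy density E = ρv²/2 + e. Assume that at a point (t,x) ∈ U the compressible non-isothermal Euler equations hold: ∂_t ρ + ∂_x(ρv) = 0; ∂_t v + ∂_x(v²/2) + (1/ρ)∂_x p + (λ/(2d))|v|v = 0; ∂_t e + ∂_x(e·v) + p·∂_x v − (λ/(2d))ρ|v|v² + (k_ω/d)(T − T_∞) = 0. Then at (t,x) the friction terms cancel and the local energy identity ∂_t E + ∂_x(v·(E + p)) = −(k_ω/d)·(T − T_∞) holds. -/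
/-- Partial derivative with respect to the time variable. -/
noncomputable def pderivT (f : ℝ × ℝ → ℝ) (t x : ℝ) : ℝ := deriv (fun τ => f (τ, x)) t

/-- Partial derivative with respect to the space variable. -/
noncomputable def pderivX (f : ℝ × ℝ → ℝ) (t x : ℝ) : ℝ := deriv (fun y => f (t, y)) x

/-!
The mass balance turns `∂_t(ρg) + ∂_x(ρgv)` into `ρ (∂_t g + v ∂_x g)` for every `g`. With
`g = v²/2`, the velocity equation multiplied by `ρv` becomes the kinetic energy balance, in which
the pressure contributes `-v ∂_x p` and a friction force `F` per unit mass dissipates `ρvF`. The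
internal energy equation carries `-p ∂_x v` and gains the same `ρvF`, so in the sum friction cancels
and the two pressure terms combine to `-∂_x(vp)`.
-/

section PartialDerivatives

variable {f g : ℝ × ℝ → ℝ} {t x : ℝ}

lemma hasDerivAt_pderivT (hf : DifferentiableAt ℝ f (t, x)) :
    HasDerivAt (fun τ => f (τ, x)) (pderivT f t x) t :=
  (hf.comp t (by fun_prop : DifferentiableAt ℝ (fun τ => (τ, x)) t)).hasDerivAt

lemma hasDerivAt_pderivX (hf : DifferentiableAt ℝ f (t, x)) :
    HasDerivAt (fun y => f (t, y)) (pderivX f t x) x :=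
  (hf.comp x (by fun_prop : DifferentiableAt ℝ (fun y => (t, y)) x)).hasDerivAt

lemma pderivT_add (hf : DifferentiableAt ℝ f (t, x)) (hg : DifferentiableAt ℝ g (t, x)) :
    pderivT (fun q => f q + g q) t x = pderivT f t x + pderivT g t x :=
  ((hasDerivAt_pderivT hf).fun_add (hasDerivAt_pderivT hg)).deriv

lemma pderivX_add (hf : DifferentiableAt ℝ f (t, x)) (hg : DifferentiableAt ℝ g (t, x)) :
    pderivX (fun q => f q + g q) t x = pderivX f t x + pderivX g t x :=
  ((hasDerivAt_pderivX hf).fun_add (hasDerivAt_pderivX hg)).deriv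

lemma pderivT_mul (hf : DifferentiableAt ℝ f (t, x)) (hg : DifferentiableAt ℝ g (t, x)) :
    pderivT (fun q => f q * g q) t x = pderivT f t x * g (t, x) + f (t, x) * pderivT g t x :=
  ((hasDerivAt_pderivT hf).fun_mul (hasDerivAt_pderivT hg)).deriv

lemma pderivX_mul (hf : DifferentiableAt ℝ f (t, x)) (hg : DifferentiableAt ℝ g (t, x)) :
    pderivX (fun q => f q * g q) t x = pderivX f t x * g (t, x) + f (t, x) * pderivX g t x :=
  ((hasDerivAt_pderivX hf).fun_mul (hasDerivAt_pderivX hg)).deriv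

lemma pderivT_sq_div_two (hf : DifferentiableAt ℝ f (t, x)) :
    pderivT (fun q => f q ^ 2 / 2) t x = f (t, x) * pderivT f t x := by
  refine (((hasDerivAt_pderivT hf).fun_pow 2).div_const 2).deriv.trans ?_
  ring

lemma pderivX_sq_div_two (hf : DifferentiableAt ℝ f (t, x)) :
    pderivX (fun q => f q ^ 2 / 2) t x = f (t, x) * pderivX f t x := by
  refine (((hasDerivAt_pderivX hf).fun_pow 2).div_const 2).deriv.trans ?_
  ring

end PartialDerivatives

/-- The material derivative `∂_t g + v ∂_x g` of `g` along the flow with velocity `v`, which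
expresses the transport of `ρg` once mass is conserved. -/
noncomputable def materialDeriv (v g : ℝ × ℝ → ℝ) (t x : ℝ) : ℝ :=
  pderivT g t x + v (t, x) * pderivX g t x

section Balances

variable {ρ v g e p : ℝ × ℝ → ℝ} {t x : ℝ}

lemma materialDeriv_sq_div_two (hg : DifferentiableAt ℝ g (t, x)) :
    materialDeriv v (fun q => g q ^ 2 / 2) t x = g (t, x) * materialDeriv v g t x := by
  rw [materialDeriv, materialDeriv, pderivT_sq_div_two hg, pderivX_sq_div_two hg]
  ring

lemma transport_eq_mul_materialDeriv (hρ : DifferentiableAt ℝ ρ (t, x))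
    (hv : DifferentiableAt ℝ v (t, x)) (hg : DifferentiableAt ℝ g (t, x))
    (mass : pderivT ρ t x + pderivX (fun q => ρ q * v q) t x = 0) :
    pderivT (fun q => ρ q * g q) t x + pderivX (fun q => v q * (ρ q * g q)) t x
      = ρ (t, x) * materialDeriv v g t x := by
  rw [pderivX_mul hρ hv] at mass
  rw [pderivT_mul hρ hg, pderivX_mul hv (hρ.fun_mul hg), pderivX_mul hρ hg, materialDeriv]
  linear_combination g (t, x) * mass

lemma kinetic_energy_balance {F : ℝ} (hρ : DifferentiableAt ℝ ρ (t, x))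
    (hv : DifferentiableAt ℝ v (t, x)) (hρ0 : ρ (t, x) ≠ 0)
    (mass : pderivT ρ t x + pderivX (fun q => ρ q * v q) t x = 0)
    (velocity : pderivT v t x + pderivX (fun q => v q ^ 2 / 2) t x
      + 1 / ρ (t, x) * pderivX p t x + F = 0) :
    pderivT (fun q => ρ q * (v q ^ 2 / 2)) t x
        + pderivX (fun q => v q * (ρ q * (v q ^ 2 / 2))) t x
      = -(v (t, x) * pderivX p t x) - ρ (t, x) * v (t, x) * F := by
  have momentum : ρ (t, x) * materialDeriv v v t x = -pderivX p t x - ρ (t, x) * F := by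
    rw [pderivX_sq_div_two hv] at velocity
    rw [materialDeriv]
    field_simp at velocity
    linear_combination velocity
  rw [transport_eq_mul_materialDeriv hρ hv (by fun_prop) mass, materialDeriv_sq_div_two hv]
  linear_combination v (t, x) * momentum

/-- `F` and `Q` are the values at `(t, x)` of the friction force per unit mass and of the heat loss
per unit volume. -/
theorem local_energy_balance_general {F Q : ℝ} (hρ : DifferentiableAt ℝ ρ (t, x))
    (hv : DifferentiableAt ℝ v (t, x)) (he : DifferentiableAt ℝ e (t, x))
    (hp : DifferentiableAt ℝ p (t, x)) (hρ0 : ρ (t, x) ≠ 0)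
    (mass : pderivT ρ t x + pderivX (fun q => ρ q * v q) t x = 0)
    (velocity : pderivT v t x + pderivX (fun q => v q ^ 2 / 2) t x
      + 1 / ρ (t, x) * pderivX p t x + F = 0)
    (internal : pderivT e t x + pderivX (fun q => e q * v q) t x
      + p (t, x) * pderivX v t x - ρ (t, x) * v (t, x) * F + Q = 0) :
    pderivT (fun q => ρ q * v q ^ 2 / 2 + e q) t x
      + pderivX (fun q => v q * ((ρ q * v q ^ 2 / 2 + e q) + p q)) t x = -Q := by
  have kinetic := kinetic_energy_balance hρ hv hρ0 mass velocity
  have hk : DifferentiableAt ℝ (fun q => ρ q * (v q ^ 2 / 2)) (t, x) := by fun_prop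
  have flux_split : pderivX (fun q => v q * ((ρ q * (v q ^ 2 / 2) + e q) + p q)) t x
      = pderivX (fun q => v q * (ρ q * (v q ^ 2 / 2))) t x + pderivX (fun q => e q * v q) t x
        + (v (t, x) * pderivX p t x + p (t, x) * pderivX v t x) := by
    rw [pderivX_mul hv ((hk.fun_add he).fun_add hp), pderivX_add (hk.fun_add he) hp,
      pderivX_add hk he, pderivX_mul hv hk, pderivX_mul he hv]
    ring
  simp only [mul_div_assoc]
  rw [pderivT_add hk he, flux_split]
  linear_combination kinetic + internal

end Balances

/-- local energy balance with friction cancellation: if `ρ, v, e` are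
differentiable on an open set `U` with `ρ > 0`, `p = (R_s/c_v)e`, `T = e/(c_v ρ)`,
`E = ρv²/2 + e`, and the compressible non-isothermal Euler equations hold at a point
`(t,x) ∈ U`, then at `(t,x)` the friction terms cancel and
`∂_t E + ∂_x(v(E+p)) = −(k_ω/d)(T − T_∞)`. -/
theorem local_energy_balance
    (Rs cv lam kω d Tinf : ℝ) (hRs : 0 < Rs) (hcv : 0 < cv) (hd : d ≠ 0)
    (ρ v e : ℝ × ℝ → ℝ)
    (U : Set (ℝ × ℝ)) (hU : IsOpen U)
    (hρ : DifferentiableOn ℝ ρ U) (hv : DifferentiableOn ℝ v U)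
    (he : DifferentiableOn ℝ e U)
    (hρpos : ∀ q ∈ U, 0 < ρ q)
    (t x : ℝ) (hmem : (t, x) ∈ U)
    -- mass balance: ∂_t ρ + ∂_x(ρv) = 0
    (h1 : pderivT ρ t x + pderivX (fun q => ρ q * v q) t x = 0)
    -- velocity equation: ∂_t v + ∂_x(v²/2) + (1/ρ)∂_x p + (λ/(2d))|v|v = 0
    (h2 : pderivT v t x + pderivX (fun q => v q ^ 2 / 2) t x
        + 1 / ρ (t, x) * pderivX (fun q => Rs / cv * e q) t x
        + lam / (2 * d) * |v (t, x)| * v (t, x) = 0)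
    -- internal energy equation:
    -- ∂_t e + ∂_x(e v) + p ∂_x v − (λ/(2d))ρ|v|v² + (k_ω/d)(T − T_∞) = 0
    (h3 : pderivT e t x + pderivX (fun q => e q * v q) t x
        + Rs / cv * e (t, x) * pderivX v t x
        - lam / (2 * d) * ρ (t, x) * |v (t, x)| * v (t, x) ^ 2
        + kω / d * (e (t, x) / (cv * ρ (t, x)) - Tinf) = 0) :
    pderivT (fun q => ρ q * v q ^ 2 / 2 + e q) t x
      + pderivX (fun q => v q * ((ρ q * v q ^ 2 / 2 + e q) + Rs / cv * e q)) t x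
      = -(kω / d) * (e (t, x) / (cv * ρ (t, x)) - Tinf) := by
  have hnhds : U ∈ nhds (t, x) := hU.mem_nhds hmem
  have he' : DifferentiableAt ℝ e (t, x) := he.differentiableAt hnhds
  rw [neg_mul]
  exact local_energy_balance_general (hρ.differentiableAt hnhds) (hv.differentiableAt hnhds) he'
    (he'.const_mul (Rs / cv)) (hρpos _ hmem).ne' h1 h2 (by linear_combination h3)
end

section
/- (Energy dissipation on a network.) Suppose each edge ω ∈ Ed has two distinct endpoints ν(ω) ≠ ν̄(ω) in N, and E(ν) = {ω ∈ Ed : ν ∈ {ν(ω), ν̄(ω)}}. Fix t ∈ ℝ and suppose: (i) for each edge ω the pipe Hamiltonian H_ω : ℝ → ℝ is differentiable at t with derivative g_ω satisfying g_ω ≤ P_ω + f(ω,ν(ω))·e(ω,ν(ω)) + f(ω,ν̄(ω))·e(ω,ν̄(ω)); (ii) at every interior node ν ∈ N₀ one has ∑_{ω ∈ E(ν)} f(ω,ν) = 0 and there exists λ_ν ∈ ℝ with e(ω,ν) = λ_ν for all ω ∈ E(ν). Then the network Hamiltonian t ↦ ∑_{ω ∈ Ed} H_ω(t) is differentiable at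 t with derivative ∑_{ω ∈ Ed} g_ω, and ∑_{ω ∈ Ed} g_ω ≤ ∑_{ω ∈ Ed} P_ω + ∑_{ν ∈ N∂} ∑_{ω ∈ E(ν)} f(ω,ν)·e(ω,ν), i.e. the coupled network dissipates energy up to the external ports and the boundary-node port pairing. -/
/-! Summing the pipe inequalities over all edges and regrouping the endpoint contributions by node
turns the total port power into a sum over nodes. At an interior node the common effort factors
out of the pairing and the remaining sum of flows vanishes, so only boundary nodes contribute. -/

theorem sum_mul_eq_zero_of_sum_eq_zero {ι R : Type*} [NonUnitalNonAssocSemiring R]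
    {s : Finset ι} {f e : ι → R} {c : R} (hf : ∑ i ∈ s, f i = 0) (he : ∀ i ∈ s, e i = c) :
    ∑ i ∈ s, f i * e i = 0 := by
  calc ∑ i ∈ s, f i * e i
      = ∑ i ∈ s, f i * c := Finset.sum_congr rfl fun i hi => by rw [he i hi]
    _ = (∑ i ∈ s, f i) * c := (Finset.sum_mul s f c).symm
    _ = 0 := by rw [hf, zero_mul]

section Network

variable {ιN ιE : Type*} [DecidableEq ιN]

/-- The set `E(ν)` of edges adjacent to the node `ν`, in a network with edge set `Ed` in which the
edge `ω` joins `νa ω` to `νb ω`. -/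
def incidentEdges (Ed : Finset ιE) (νa νb : ιE → ιN) (ν : ιN) : Finset ιE :=
  Ed.filter fun ω => ν = νa ω ∨ ν = νb ω

variable {N N₀ : Finset ιN} {Ed : Finset ιE} {νa νb : ιE → ιN}

theorem mem_incidentEdges {ν : ιN} {ω : ιE} :
    ω ∈ incidentEdges Ed νa νb ν ↔ ω ∈ Ed ∧ (ν = νa ω ∨ ν = νb ω) :=
  Finset.mem_filter

theorem sum_sum_incidentEdges {M : Type*} [AddCommMonoid M]
    (hdistinct : ∀ ω ∈ Ed, νa ω ≠ νb ω) (hendpoints : ∀ ω ∈ Ed, νa ω ∈ N ∧ νb ω ∈ N)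
    (p : ιE → ιN → M) :
    ∑ ν ∈ N, ∑ ω ∈ incidentEdges Ed νa νb ν, p ω ν
      = ∑ ω ∈ Ed, (p ω (νa ω) + p ω (νb ω)) := by
  have mem_comm : ∀ ν ω, ν ∈ N ∧ ω ∈ incidentEdges Ed νa νb ν
      ↔ ν ∈ ({νa ω, νb ω} : Finset ιN) ∧ ω ∈ Ed := by
    intro ν ω
    rw [mem_incidentEdges, Finset.mem_insert, Finset.mem_singleton]
    constructor
    · rintro ⟨-, hω, hν⟩
      exact ⟨hν, hω⟩
    · rintro ⟨rfl | rfl, hω⟩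
      · exact ⟨(hendpoints ω hω).1, hω, Or.inl rfl⟩
      · exact ⟨(hendpoints ω hω).2, hω, Or.inr rfl⟩
  calc ∑ ν ∈ N, ∑ ω ∈ incidentEdges Ed νa νb ν, p ω ν
      = ∑ ω ∈ Ed, ∑ ν ∈ {νa ω, νb ω}, p ω ν := Finset.sum_comm' mem_comm
    _ = ∑ ω ∈ Ed, (p ω (νa ω) + p ω (νb ω)) :=
        Finset.sum_congr rfl fun ω hω => Finset.sum_pair (hdistinct ω hω)

theorem sum_endpoint_pairing_eq_sum_boundary_pairing {R : Type*} [NonUnitalNonAssocSemiring R]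
    {f e : ιE → ιN → R}
    (hdistinct : ∀ ω ∈ Ed, νa ω ≠ νb ω) (hendpoints : ∀ ω ∈ Ed, νa ω ∈ N ∧ νb ω ∈ N)
    (hcoupling : ∀ ν ∈ N₀, ∑ ω ∈ incidentEdges Ed νa νb ν, f ω ν = 0)
    (heffort : ∀ ν ∈ N₀, ∃ c, ∀ ω ∈ incidentEdges Ed νa νb ν, e ω ν = c) :
    ∑ ω ∈ Ed, (f ω (νa ω) * e ω (νa ω) + f ω (νb ω) * e ω (νb ω))
      = ∑ ν ∈ N \ N₀, ∑ ω ∈ incidentEdges Ed νa νb ν, f ω ν * e ω ν := by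
  have interior_pairing : ∀ ν ∈ N₀, ∑ ω ∈ incidentEdges Ed νa νb ν, f ω ν * e ω ν = 0 := by
    intro ν hν
    obtain ⟨c, hc⟩ := heffort ν hν
    exact sum_mul_eq_zero_of_sum_eq_zero (hcoupling ν hν) hc
  calc ∑ ω ∈ Ed, (f ω (νa ω) * e ω (νa ω) + f ω (νb ω) * e ω (νb ω))
      = ∑ ν ∈ N, ∑ ω ∈ incidentEdges Ed νa νb ν, f ω ν * e ω ν :=
        (sum_sum_incidentEdges hdistinct hendpoints fun ω ν => f ω ν * e ω ν).symm
    _ = ∑ ν ∈ N \ N₀, ∑ ω ∈ incidentEdges Ed νa νb ν, f ω ν * e ω ν := by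
        refine (Finset.sum_subset Finset.sdiff_subset fun ν hν hν' => interior_pairing ν ?_).symm
        by_contra hν₀
        exact hν' (Finset.mem_sdiff.mpr ⟨hν, hν₀⟩)

end Network

/-- energy dissipation on a network: suppose each edge `ω` has two
distinct endpoints `ν(ω) ≠ ν̄(ω)` in the node set `N`, with
`E(ν) = {ω ∈ Ed : ν ∈ {ν(ω), ν̄(ω)}}`. If (i) each pipe Hamiltonian `H_ω` is
differentiable at `t` with derivative `g_ω` satisfying
`g_ω ≤ P_ω + f(ω,ν(ω))·e(ω,ν(ω)) + f(ω,ν̄(ω))·e(ω,ν̄(ω))`, and (ii) at every interior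
node `ν ∈ N₀` one has `∑_{ω ∈ E(ν)} f(ω,ν) = 0` and all boundary efforts at `ν` are
equal, then the network Hamiltonian `∑_ω H_ω` is differentiable at `t` with derivative
`∑_ω g_ω`, and `∑_ω g_ω ≤ ∑_ω P_ω + ∑_{ν ∈ N∂} ∑_{ω ∈ E(ν)} f(ω,ν)·e(ω,ν)`. -/
theorem network_energy_dissipation
    {ιN ιE : Type*} [DecidableEq ιN] [DecidableEq ιE]
    (N N₀ : Finset ιN) (hN₀ : N₀ ⊆ N)
    (Ed : Finset ιE)
    (νa νb : ιE → ιN)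
    (hdistinct : ∀ ω ∈ Ed, νa ω ≠ νb ω)
    (hendpoints : ∀ ω ∈ Ed, νa ω ∈ N ∧ νb ω ∈ N)
    (f e : ιE → ιN → ℝ)
    (H : ιE → ℝ → ℝ) (g P : ιE → ℝ) (t : ℝ)
    (hH : ∀ ω ∈ Ed, HasDerivAt (H ω) (g ω) t)
    (hg : ∀ ω ∈ Ed, g ω ≤ P ω + f ω (νa ω) * e ω (νa ω) + f ω (νb ω) * e ω (νb ω))
    (hcoupling : ∀ ν ∈ N₀,
      ∑ ω ∈ Ed.filter (fun ω => ν = νa ω ∨ ν = νb ω), f ω ν = 0)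
    (heffort : ∀ ν ∈ N₀, ∃ lam : ℝ,
      ∀ ω ∈ Ed.filter (fun ω => ν = νa ω ∨ ν = νb ω), e ω ν = lam) :
    HasDerivAt (fun τ => ∑ ω ∈ Ed, H ω τ) (∑ ω ∈ Ed, g ω) t
    ∧ ∑ ω ∈ Ed, g ω
        ≤ ∑ ω ∈ Ed, P ω
          + ∑ ν ∈ N \ N₀, ∑ ω ∈ Ed.filter (fun ω => ν = νa ω ∨ ν = νb ω),
              f ω ν * e ω ν := by
  refine ⟨HasDerivAt.fun_sum hH, ?_⟩
  calc ∑ ω ∈ Ed, g ω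
      ≤ ∑ ω ∈ Ed, (P ω + (f ω (νa ω) * e ω (νa ω) + f ω (νb ω) * e ω (νb ω))) :=
        Finset.sum_le_sum fun ω hω => (hg ω hω).trans_eq (add_assoc _ _ _)
    _ = ∑ ω ∈ Ed, P ω + ∑ ω ∈ Ed, (f ω (νa ω) * e ω (νa ω) + f ω (νb ω) * e ω (νb ω)) :=
        Finset.sum_add_distrib
    _ = ∑ ω ∈ Ed, P ω + ∑ ν ∈ N \ N₀, ∑ ω ∈ incidentEdges Ed νa νb ν, f ω ν * e ω ν := by
        rw [sum_endpoint_pairing_eq_sum_boundary_pairing hdistinct hendpoints hcoupling heffort]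
end
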